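/- arXiv:1411.4597 — 6 statements merged into one kernel-verified Lean document; each statement's English description precedes it below -/
import Mathlib

section
/- Let C be a category with pullbacks and m : X → Z an arrow of C. Then the following are equivalent: (1) the pullback functor pb_m : C↓Z → C↓X has a right adjoint G such that the counit of the adjunction is a natural isomorphism; (2) for every arrow f : Y → X there exist composable arrows n : Y → W and h : W → Z forming a final pullback complement of (f, m). Moreover, if these hold then for each f : Y → X the object h of C↓Z is isomorphic to G(f). -/
open CategoryTheory CategoryTheory.Limits

universe v u

/-- A stable system of monos in a category `C`: a class of monomorphisms containing all
isomorphisms, closed under composition, and stable under pullback. -/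
structure StableSystemOfMonos (C : Type u) [Category.{v} C] where
  mem : ∀ {X Y : C}, (X ⟶ Y) → Prop
  mono_of_mem : ∀ {X Y : C} {f : X ⟶ Y}, mem f → Mono f
  mem_of_isIso : ∀ {X Y : C} (f : X ⟶ Y), IsIso f → mem f
  mem_comp : ∀ {X Y Z : C} {f : X ⟶ Y} {g : Y ⟶ Z}, mem f → mem g → mem (f ≫ g)
  mem_of_isPullback : ∀ {W X Y Z : C} {m : X ⟶ Z} {f : Y ⟶ Z} {f' : W ⟶ X} {m' : W ⟶ Y},
    IsPullback f' m' m f → mem m → mem m'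

/-- An `M`-partial map classifier `(T, η)` for a category `C`: for every mono `m : X ⟶ Z`
in `M` and every arrow `f : X ⟶ Y` there is a unique arrow `φ(m,f) : Z ⟶ T(Y)` such that
`f ≫ η_Y = m ≫ φ(m,f)` and this commuting square is a pullback. -/
structure MPartialMapClassifier {C : Type u} [Category.{v} C] (M : StableSystemOfMonos C) where
  T : C ⥤ C
  η : 𝟭 C ⟶ T
  φ : ∀ {X Y Z : C} (m : X ⟶ Z), M.mem m → (X ⟶ Y) → (Z ⟶ T.obj Y)
  isPullback_φ : ∀ {X Y Z : C} (m : X ⟶ Z) (hm : M.mem m) (f : X ⟶ Y),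
    IsPullback f m (η.app Y) (φ m hm f)
  φ_uniq : ∀ {X Y Z : C} (m : X ⟶ Z) (hm : M.mem m) (f : X ⟶ Y) (ψ : Z ⟶ T.obj Y),
    IsPullback f m (η.app Y) ψ → ψ = φ m hm f

/-- `(n : K ⟶ D, a : D ⟶ G)` is a final pullback complement of `(l : K ⟶ L, m : L ⟶ G)`:
the square `l ≫ m = n ≫ a` is a pullback, and for every pullback square `d ≫ m = e ≫ f`
and every arrow `h : K' ⟶ K` with `h ≫ l = d` there is a unique `g : D' ⟶ D` with
`g ≫ a = f` and `e ≫ g = h ≫ n`. -/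
def IsFinalPullbackComplement {C : Type u} [Category.{v} C] {K L D G : C}
    (l : K ⟶ L) (m : L ⟶ G) (n : K ⟶ D) (a : D ⟶ G) : Prop :=
  IsPullback l n m a ∧
  ∀ {K' D' : C} (d : K' ⟶ L) (e : K' ⟶ D') (f : D' ⟶ G) (h : K' ⟶ K),
    IsPullback d e m f → h ≫ l = d →
    ∃! g : D' ⟶ D, g ≫ a = f ∧ e ≫ g = h ≫ n

/-!
Every pullback square `f ≫ m = n ≫ h` comes from a unique isomorphism from the pullback of `h`
along `m` to `f` in the slice over `X`. Under this correspondence, finality of the square says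
exactly that the isomorphism is a universal arrow from the pullback functor to `f`. A functor has a
right adjoint with invertible counit iff every object of its target receives an invertible
universal arrow, and a universal arrow to `f` determines its source up to isomorphism.
-/

section UniversalArrows

variable {C D : Type*} [Category* C] [Category* D] {F : C ⥤ D}

theorem nonempty_isUniversal_mk_iff {A : C} {B : D} (ε : F.obj A ⟶ B) :
    Nonempty (CostructuredArrow.mk ε).IsUniversal ↔
      ∀ (A' : C) (k : F.obj A' ⟶ B), ∃! g : A' ⟶ A, F.map g ≫ ε = k := by
  constructor
  · rintro ⟨hε⟩ A' k
    exact hε.existsUnique (.mk k)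
  · intro hε
    choose lift fac uniq using hε
    exact ⟨IsTerminal.ofUniqueHom
      (fun T => CostructuredArrow.homMk (lift T.left T.hom) (fac T.left T.hom))
      (fun T φ => CostructuredArrow.hom_ext _ _ (uniq T.left T.hom _ (CostructuredArrow.w φ)))⟩

theorem isIso_counit_app_of_isUniversal {G : D ⥤ C} (adj : F ⊣ G) {A : C} {B : D}
    (ε : F.obj A ≅ B) (hε : (CostructuredArrow.mk ε.hom).IsUniversal) :
    IsIso (adj.counit.app B) := by
  let e := (mkTerminalOfRightAdjoint _ adj B).uniqueUpToIso hε
  have hcounit : F.map e.hom.left ≫ ε.hom = adj.counit.app B := CostructuredArrow.w e.hom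
  rw [← hcounit]
  infer_instance

theorem exists_rightAdjoint_isIso_counit_iff :
    (∃ (G : D ⥤ C) (adj : F ⊣ G), IsIso adj.counit) ↔
      ∀ B : D, ∃ (A : C) (ε : F.obj A ≅ B), Nonempty (CostructuredArrow.mk ε.hom).IsUniversal := by
  constructor
  · rintro ⟨G, adj, _⟩ B
    exact ⟨G.obj B, asIso (adj.counit.app B), ⟨mkTerminalOfRightAdjoint _ adj B⟩⟩
  · intro hF
    choose A ε hε using hF
    have : F.IsLeftAdjoint :=
      isLeftAdjoint_iff_hasTerminal_costructuredArrow.2 fun B => (hε B).some.hasTerminal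
    let adj := Adjunction.ofIsLeftAdjoint F
    have (B : D) : IsIso (adj.counit.app B) := isIso_counit_app_of_isUniversal adj (ε B) (hε B).some
    exact ⟨_, adj, NatIso.isIso_of_isIso_app _⟩

end UniversalArrows

section PullbackSquares

variable {C : Type*} [Category* C] {X Y Z W : C} {m : X ⟶ Z}
  {f : Y ⟶ X} {n : Y ⟶ W} {h : W ⟶ Z}

theorem over_hom_ext_of_isPullback (sq : IsPullback f n m h) {A : Over X} {k k' : A ⟶ Over.mk f}
    (hn : k.left ≫ n = k'.left ≫ n) : k = k' :=
  Over.OverMorphism.ext (sq.hom_ext ((Over.w k).trans (Over.w k').symm) hn)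

variable [HasPullbacksAlong m]

/-- The comparison isomorphism in the slice over `X` from the chosen pullback of `h` along `m` to
the side `f` of a given pullback square; `f` is taken as first projection, as in
`IsFinalPullbackComplement`. -/
noncomputable def overPullbackIso (sq : IsPullback f n m h) :
    (Over.pullback m).obj (Over.mk h) ≅ Over.mk f :=
  Over.isoMk ((IsPullback.of_hasPullback h m).flip.isoIsPullback _ _ sq)
    (IsPullback.isoIsPullback_hom_fst ..)

theorem overPullbackIso_hom_left_comp (sq : IsPullback f n m h) :
    (overPullbackIso sq).hom.left ≫ n = pullback.fst h m :=
  IsPullback.isoIsPullback_hom_snd ..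

theorem exists_overPullbackIso_eq (ε : (Over.pullback m).obj (Over.mk h) ≅ Over.mk f) :
    ∃ (n : Y ⟶ W) (sq : IsPullback f n m h), overPullbackIso sq = ε := by
  let i : pullback h m ≅ Y := (Over.forget X).mapIso ε
  have hi : i.hom ≫ f = pullback.snd h m := Over.w ε.hom
  have sq : IsPullback f (i.inv ≫ pullback.fst h m) m h :=
    (IsPullback.of_hasPullback h m).flip.of_iso i (.refl _) (.refl _) (.refl _)
      (by simp [hi]) (by simp) (by simp) (by simp)
  exact ⟨_, sq, Iso.ext (over_hom_ext_of_isPullback sq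
    ((overPullbackIso_hom_left_comp sq).trans (i.hom_inv_id_assoc _).symm))⟩

theorem overPullback_map_comp_eq_iff {Y' W' : C} {f' : Y' ⟶ X} {n' : Y' ⟶ W'} {h' : W' ⟶ Z}
    (sq : IsPullback f n m h) (sq' : IsPullback f' n' m h')
    (g : Over.mk h' ⟶ Over.mk h) (k : Over.mk f' ⟶ Over.mk f) :
    (Over.pullback m).map g ≫ (overPullbackIso sq).hom = (overPullbackIso sq').hom ≫ k ↔
      n' ≫ g.left = k.left ≫ n := by
  have hmap : ((Over.pullback m).map g ≫ (overPullbackIso sq).hom).left ≫ n =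
      (overPullbackIso sq').hom.left ≫ n' ≫ g.left := by
    rw [Over.comp_left, Category.assoc, overPullbackIso_hom_left_comp, ← Category.assoc,
      overPullbackIso_hom_left_comp]
    exact pullback.lift_fst ..
  have hcomp : ((overPullbackIso sq').hom ≫ k).left ≫ n =
      (overPullbackIso sq').hom.left ≫ k.left ≫ n := by
    rw [Over.comp_left, Category.assoc]
  have : IsIso (overPullbackIso sq').hom.left :=
    inferInstanceAs (IsIso ((Over.forget X).map (overPullbackIso sq').hom))
  rw [← cancel_epi (overPullbackIso sq').hom.left, ← hmap, ← hcomp]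
  exact ⟨fun heq => by rw [heq], over_hom_ext_of_isPullback sq⟩

theorem isFinalPullbackComplement_iff_isUniversal (sq : IsPullback f n m h) :
    IsFinalPullbackComplement f m n h ↔
      Nonempty (CostructuredArrow.mk (overPullbackIso sq).hom).IsUniversal := by
  rw [nonempty_isUniversal_mk_iff]
  constructor
  · rintro ⟨-, hfinal⟩ A k
    have sq' := (IsPullback.of_hasPullback A.hom m).flip
    let k' := (overPullbackIso sq').inv ≫ k
    have factors_iff (g : A ⟶ Over.mk h) :
        (Over.pullback m).map g ≫ (overPullbackIso sq).hom = k ↔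
          pullback.fst A.hom m ≫ g.left = k'.left ≫ n := by
      rw [← overPullback_map_comp_eq_iff sq sq' g k', Iso.hom_inv_id_assoc]
    obtain ⟨g, ⟨hg, hgn⟩, huniq⟩ := hfinal _ _ _ k'.left sq' (Over.w k')
    refine ⟨Over.homMk g hg, (factors_iff _).2 hgn, fun g' hg' => Over.OverMorphism.ext ?_⟩
    exact huniq _ ⟨Over.w g', (factors_iff _).1 hg'⟩
  · refine fun huniv => ⟨sq, fun d e h' k sq' hk => ?_⟩
    have factors_iff (g : Over.mk h' ⟶ Over.mk h) :=
      overPullback_map_comp_eq_iff sq sq' g (Over.homMk k hk)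
    obtain ⟨g, hg, huniq⟩ := huniv _ ((overPullbackIso sq').hom ≫ Over.homMk k hk)
    refine ⟨g.left, ⟨Over.w g, (factors_iff g).1 hg⟩, fun g' ⟨hg', hgn⟩ => ?_⟩
    exact congrArg CommaMorphism.left (huniq (Over.homMk g' hg') ((factors_iff _).2 hgn))

theorem exists_isFinalPullbackComplement_iff (f : Y ⟶ X) (h : W ⟶ Z) :
    (∃ n : Y ⟶ W, IsFinalPullbackComplement f m n h) ↔
      ∃ ε : (Over.pullback m).obj (Over.mk h) ≅ Over.mk f,
        Nonempty (CostructuredArrow.mk ε.hom).IsUniversal := by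
  constructor
  · rintro ⟨n, hfinal⟩
    exact ⟨_, (isFinalPullbackComplement_iff_isUniversal hfinal.1).1 hfinal⟩
  · rintro ⟨ε, hε⟩
    obtain ⟨n, sq, rfl⟩ := exists_overPullbackIso_eq ε
    exact ⟨n, (isFinalPullbackComplement_iff_isUniversal sq).2 hε⟩

end PullbackSquares

theorem fpbc_iff_right_adjoint_general {C : Type*} [Category* C] {X Z : C} (m : X ⟶ Z)
    [HasPullbacksAlong m] :
    ((∃ (G : Over X ⥤ Over Z) (adj : Over.pullback m ⊣ G), IsIso adj.counit) ↔
      ∀ {Y : C} (f : Y ⟶ X), ∃ (W : C) (n : Y ⟶ W) (h : W ⟶ Z),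
        IsFinalPullbackComplement f m n h) ∧
    ∀ (G : Over X ⥤ Over Z), (Over.pullback m ⊣ G) →
      ∀ {Y W : C} (f : Y ⟶ X) (n : Y ⟶ W) (h : W ⟶ Z),
        IsFinalPullbackComplement f m n h →
        Nonempty (Over.mk h ≅ G.obj (Over.mk f)) := by
  refine ⟨exists_rightAdjoint_isIso_counit_iff.trans ⟨fun huniv Y f => ?_, fun hfinal B => ?_⟩, ?_⟩
  · obtain ⟨P, hP⟩ := huniv (Over.mk f)
    obtain ⟨n, hn⟩ := (exists_isFinalPullbackComplement_iff f P.hom).2 hP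
    exact ⟨P.left, n, P.hom, hn⟩
  · obtain ⟨W, n, h, hn⟩ := hfinal B.hom
    exact ⟨Over.mk h, (exists_isFinalPullbackComplement_iff B.hom h).1 ⟨n, hn⟩⟩
  · intro G adj Y W f n h hn
    obtain ⟨ε, ⟨hε⟩⟩ := (exists_isFinalPullbackComplement_iff f h).1 ⟨n, hn⟩
    exact ⟨(CostructuredArrow.proj _ _).mapIso
      (hε.uniqueUpToIso (mkTerminalOfRightAdjoint _ adj (Over.mk f)))⟩

/-- the pullback functor `pb_m` has a right adjoint with invertible counit
iff every arrow `f : Y ⟶ X` admits a final pullback complement with `m`; moreover in that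
case the final pullback complement object `h` is isomorphic to `G(f)` in `C↓Z`. -/
theorem fpbc_iff_right_adjoint {C : Type u} [Category.{v} C] [HasPullbacks C]
    {X Z : C} (m : X ⟶ Z) :
    ((∃ (G : Over X ⥤ Over Z) (adj : Over.pullback m ⊣ G), IsIso adj.counit) ↔
      ∀ {Y : C} (f : Y ⟶ X), ∃ (W : C) (n : Y ⟶ W) (h : W ⟶ Z),
        IsFinalPullbackComplement f m n h) ∧
    ∀ (G : Over X ⥤ Over Z) (adj : Over.pullback m ⊣ G), IsIso adj.counit →
      ∀ {Y W : C} (f : Y ⟶ X) (n : Y ⟶ W) (h : W ⟶ Z),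
        IsFinalPullbackComplement f m n h →
        Nonempty (Over.mk h ≅ G.obj (Over.mk f)) :=
  let ⟨hiff, hiso⟩ := fpbc_iff_right_adjoint_general m
  ⟨hiff, fun G adj _ _ _ f n h => hiso G adj f n h⟩
end

section
/- Let C be a category with pullbacks, M a stable system of monos of C, and (T, η) an M-partial map classifier for C. Assume C has a terminal object 1 and a strict initial object 0 (every arrow with target 0 has source 0), and that the unique arrow ! : 0 → 1 belongs to M. Then the arrow \overline{!} = φ(!, id_0) : 1 → T(0) is an isomorphism, whose inverse is the unique arrow !_{T(0)} : T(0) → 1; in particular T(0) is isomorphic to the terminal object 1. -/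
open CategoryTheory CategoryTheory.Limits

universe v u

/-! `T(0)` represents partial maps into `0` with domain in `M`. By strictness such a partial map has
an initial domain, so an object `Z` admits exactly one of them, provided that `0 ⟶ Z` lies in `M`;
and `0 ⟶ Z` is the pullback of `! : 0 ⟶ 1` along `Z ⟶ 1`. Hence `T(0)` is terminal. -/

theorem isPullback_of_isInitial {C : Type u} [Category.{v} C] [HasStrictInitialObjects C]
    {O X Z W : C} (hO : IsInitial O) (fst : X ⟶ O) (snd : X ⟶ Z) (f : O ⟶ W) (g : Z ⟶ W) :
    IsPullback fst snd f g := by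
  have hX : IsInitial X := hO.ofStrict fst
  have : IsIso fst := hO.isIso_to fst
  exact ⟨⟨hX.hom_ext _ _⟩, ⟨PullbackCone.IsLimit.mk _ (fun s => s.fst ≫ inv fst)
    (fun _ => hO.strict_hom_ext _ _)
    (fun s => (hO.ofStrict s.fst).hom_ext _ _)
    (fun _ _ _ _ => hX.strict_hom_ext _ _)⟩⟩

section

variable {C : Type u} [Category.{v} C] [HasStrictInitialObjects C] {M : StableSystemOfMonos C}
  {O : C}

theorem StableSystemOfMonos.mem_of_isInitial (hO : IsInitial O) {Z W : C} {m : O ⟶ W}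
    (hm : M.mem m) (m' : O ⟶ Z) (g : Z ⟶ W) : M.mem m' :=
  M.mem_of_isPullback (isPullback_of_isInitial hO (𝟙 O) m' m g) hm

namespace MPartialMapClassifier

variable (P : MPartialMapClassifier M)

theorem hom_ext_of_isInitial (hO : IsInitial O) {Z : C} {m : O ⟶ Z} (hm : M.mem m)
    (a b : Z ⟶ P.T.obj O) : a = b := by
  have eq_φ (c : Z ⟶ P.T.obj O) : c = P.φ m hm (𝟙 O) :=
    P.φ_uniq m hm (𝟙 O) c (isPullback_of_isInitial hO _ _ _ _)
  rw [eq_φ a, eq_φ b]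

/-- Terminality of `T(0)`: the arrow `Z ⟶ T(0)` classifies the partial map from `Z` to `0` given by
the identity of `0`. -/
def isTerminalObj (hO : IsInitial O) (h : ∀ Z : C, M.mem (hO.to Z)) :
    IsTerminal (P.T.obj O) :=
  IsTerminal.ofUniqueHom (fun Z => P.φ (hO.to Z) (h Z) (𝟙 O))
    (fun Z _ => P.hom_ext_of_isInitial hO (h Z) _ _)

end MPartialMapClassifier

end

theorem barBang_isIso_general {C : Type u} [Category.{v} C] [HasStrictInitialObjects C]
    {M : StableSystemOfMonos C} (P : MPartialMapClassifier M) {O I : C} (hO : IsInitial O)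
    (hI : IsTerminal I) {m : O ⟶ I} (hm : M.mem m) :
    P.φ m hm (𝟙 O) ≫ hI.from (P.T.obj O) = 𝟙 I ∧
    hI.from (P.T.obj O) ≫ P.φ m hm (𝟙 O) = 𝟙 (P.T.obj O) ∧
    IsIso (P.φ m hm (𝟙 O)) ∧
    Nonempty (P.T.obj O ≅ I) := by
  have hT : IsTerminal (P.T.obj O) :=
    P.isTerminalObj hO fun Z => M.mem_of_isInitial hO hm (hO.to Z) (hI.from Z)
  exact ⟨hI.hom_ext _ _, hT.hom_ext _ _, isIso_of_isTerminal hI hT _, ⟨hT.uniqueUpToIso hI⟩⟩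

/-- with a terminal object `1`, a strict initial object `0` and `! : 0 → 1`
in `M`, the arrow `\overline{!} = φ(!, id_0) : 1 ⟶ T(0)` is an isomorphism whose inverse
is the unique arrow `T(0) ⟶ 1`; in particular `T(0) ≅ 1`. -/
theorem barBang_isIso {C : Type u} [Category.{v} C] [HasPullbacks C]
    [HasTerminal C] [HasInitial C] [HasStrictInitialObjects C]
    (M : StableSystemOfMonos C) (P : MPartialMapClassifier M)
    (hbang : M.mem (initial.to (⊤_ C))) :
    P.φ (initial.to (⊤_ C)) hbang (𝟙 (⊥_ C)) ≫ terminal.from (P.T.obj (⊥_ C)) = 𝟙 (⊤_ C) ∧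
    terminal.from (P.T.obj (⊥_ C)) ≫ P.φ (initial.to (⊤_ C)) hbang (𝟙 (⊥_ C)) =
      𝟙 (P.T.obj (⊥_ C)) ∧
    IsIso (P.φ (initial.to (⊤_ C)) hbang (𝟙 (⊥_ C))) ∧
    Nonempty (P.T.obj (⊥_ C) ≅ ⊤_ C) :=
  barBang_isIso_general P initialIsInitial terminalIsTerminal hbang
end

section
/- Let C be a category with pullbacks, M a stable system of monos of C, (T, η) an M-partial map classifier for C, with terminal object 1, strict initial object 0, and ! : 0 → 1 in M. Then for every arrow l : K → L, the strict complement of l in T(l), namely the arrow T(l)∖l : T(K)∖K → T(L)∖L induced (with respect to the monos η_K and η_L and the pullback square η_L ∘ l = T(l) ∘ η_K) between the strict complements of η_K and η_L, is an isomorphism. -/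
/-!
A strict complement of `m` represents the arrows disjoint from `m`, that is, those whose pullback
along `m` is initial. An arrow `Z ⟶ T(Y)` disjoint from `η_Y` classifies the partial map
`Z ⇀ Y` with empty domain, so there is exactly one of them, and the strict complement of `η_Y` is
therefore terminal. For this one needs the point `1 ⟶ T(0) ⟶ T(Y)` to be disjoint from `η_Y`: if
it agrees on `V` with `v ≫ η_Y` for some `v : V ⟶ Y`, then naturality of `η` makes `v ≫ f`
independent of `f : Y ⟶ N`, and comparing the two points of `T(1)` classifying the subobjects `1`
and `0` of `1` shows `V` to be initial.
-/

open CategoryTheory CategoryTheory.Limits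

universe v u

variable {C : Type u} [Category.{v} C]

/-- The arrow `false = T(!) ∘ \overline{!} : 1 ⟶ T(1)`, where `\overline{!} = φ(!, id_0)`. -/
noncomputable def falseArrow [HasTerminal C] [HasInitial C] (M : StableSystemOfMonos C)
    (P : MPartialMapClassifier M) (hbang : M.mem (initial.to (⊤_ C))) :
    (⊤_ C) ⟶ P.T.obj (⊤_ C) :=
  P.φ (initial.to (⊤_ C)) hbang (𝟙 (⊥_ C)) ≫ P.T.map (initial.to (⊤_ C))

/-- `i : Gc ⟶ G` is a strict complement of the mono `m : L ⟶ G` in `M`: it is a pullback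
of the characteristic arrow `χ_m = φ(m, !_L)` along `false : 1 ⟶ T(1)`. -/
def IsStrictComplement [HasTerminal C] [HasInitial C] (M : StableSystemOfMonos C)
    (P : MPartialMapClassifier M) (hbang : M.mem (initial.to (⊤_ C)))
    {L G Gc : C} (m : L ⟶ G) (hm : M.mem m) (i : Gc ⟶ G) : Prop :=
  IsPullback i (terminal.from Gc) (P.φ m hm (terminal.from L)) (falseArrow M P hbang)

section DisjointArrows

variable [HasInitial C]

/-- Arrows `f` and `g` with common target are disjoint if their pullback is initial. It is expressed
on generalized elements, so that no pullback has to exist; when the initial object is strict,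
a map `V ⟶ ⊥_ C` says that `V` is initial. -/
def DisjointArrows {X Y Z : C} (f : X ⟶ Z) (g : Y ⟶ Z) : Prop :=
  ∀ ⦃V : C⦄ (a : V ⟶ X) (b : V ⟶ Y), a ≫ f = b ≫ g → Nonempty (V ⟶ ⊥_ C)

theorem DisjointArrows.comp_right {W X Y Z : C} {f : X ⟶ Z} {g : Y ⟶ Z}
    (h : DisjointArrows f g) (w : W ⟶ Y) : DisjointArrows f (w ≫ g) :=
  fun _ a b hab => h a (b ≫ w) (by simpa using hab)

theorem DisjointArrows.isPullback [HasStrictInitialObjects C] {X Y Z : C} {f : X ⟶ Z} {g : Y ⟶ Z}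
    (h : DisjointArrows f g) : IsPullback (initial.to X) (initial.to Y) f g := by
  have hom_ext (s : PullbackCone f g) {N : C} (a b : s.pt ⟶ N) : a = b :=
    (initialIsInitial.ofStrict (h s.fst s.snd s.condition).some).hom_ext a b
  exact ⟨⟨initial.hom_ext _ _⟩, ⟨PullbackCone.IsLimit.mk _
    (fun s => (h s.fst s.snd s.condition).some) (fun s => hom_ext s _ _) (fun s => hom_ext s _ _)
    (fun s _ _ _ => hom_ext s _ _)⟩⟩

theorem disjointArrows_comp_iff_of_isPullback {P W X Y Z : C} {fst : P ⟶ X} {snd : P ⟶ Y}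
    {f : X ⟶ Z} {g : Y ⟶ Z} (h : IsPullback fst snd f g) (x : W ⟶ Y) :
    DisjointArrows f (x ≫ g) ↔ DisjointArrows snd x := by
  refine ⟨fun hd V a b hab => hd (a ≫ fst) b ?_, fun hd V a b hab => ?_⟩
  · rw [Category.assoc, h.w, reassoc_of% hab]
  · have hab' : a ≫ f = (b ≫ x) ≫ g := by simpa using hab
    exact hd (h.lift a (b ≫ x) hab') b (h.lift_snd _ _ _)

theorem StableSystemOfMonos.mem_initial_to [HasTerminal C] [HasStrictInitialObjects C]
    (M : StableSystemOfMonos C) (hbang : M.mem (initial.to (⊤_ C))) (Z : C) :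
    M.mem (initial.to Z) := by
  have hd : DisjointArrows (initial.to (⊤_ C)) (terminal.from Z) := fun _ a _ _ => ⟨a⟩
  exact M.mem_of_isPullback hd.isPullback hbang

end DisjointArrows

namespace MPartialMapClassifier

variable {M : StableSystemOfMonos C} (P : MPartialMapClassifier M)

theorem mono_η_app (Y : C) : Mono (P.η.app Y) := by
  refine ⟨fun {Z} a b hab => ?_⟩
  have ha := P.isPullback_φ (𝟙 Z) (M.mem_of_isIso _ inferInstance) a
  have hw : b ≫ P.η.app Y = 𝟙 Z ≫ P.φ (𝟙 Z) (M.mem_of_isIso _ inferInstance) a :=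
    hab.symm.trans ha.w
  have hlift : ha.lift b (𝟙 Z) hw = 𝟙 Z := by simpa using ha.lift_snd b (𝟙 Z) hw
  simpa [hlift] using ha.lift_fst b (𝟙 Z) hw

variable [HasTerminal C] [HasInitial C]

theorem eq_of_disjointArrows [HasStrictInitialObjects C] {Y Z : C} {x y : Z ⟶ P.T.obj Y}
    (hbang : M.mem (initial.to (⊤_ C)))
    (hx : DisjointArrows (P.η.app Y) x) (hy : DisjointArrows (P.η.app Y) y) : x = y :=
  (P.φ_uniq _ (M.mem_initial_to hbang Z) _ x hx.isPullback).trans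
    (P.φ_uniq _ (M.mem_initial_to hbang Z) _ y hy.isPullback).symm

variable (hbang : M.mem (initial.to (⊤_ C)))

/-- The point `T(!) ∘ \overline{!} : 1 ⟶ T(Y)` classifying the partial map `1 ⇀ Y` with empty
domain. It is defined through `T(0)`, rather than as `φ(!, !)`, so that it is natural in `Y` and
specializes to `falseArrow` at `Y = 1`. -/
noncomputable def undefinedPoint (Y : C) : (⊤_ C) ⟶ P.T.obj Y :=
  P.φ (initial.to (⊤_ C)) hbang (𝟙 (⊥_ C)) ≫ P.T.map (initial.to Y)

theorem undefinedPoint_comp_map {Y N : C} (f : Y ⟶ N) :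
    P.undefinedPoint hbang Y ≫ P.T.map f = P.undefinedPoint hbang N := by
  simp [undefinedPoint, ← P.T.map_comp]

theorem falseArrow_eq_undefinedPoint :
    falseArrow M P hbang = P.undefinedPoint hbang (⊤_ C) :=
  rfl

theorem comp_eq_comp_of_comp_η_eq_undefinedPoint {V Y N : C} {v : V ⟶ Y} {t : V ⟶ ⊤_ C}
    (hv : v ≫ P.η.app Y = t ≫ P.undefinedPoint hbang Y) (f g : Y ⟶ N) : v ≫ f = v ≫ g := by
  have := P.mono_η_app N
  have comp_η (k : Y ⟶ N) : (v ≫ k) ≫ P.η.app N = t ≫ P.undefinedPoint hbang N :=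
    calc (v ≫ k) ≫ P.η.app N = (v ≫ P.η.app Y) ≫ P.T.map k := by
          simpa using v ≫= P.η.naturality k
      _ = t ≫ P.undefinedPoint hbang N := by
          rw [hv, Category.assoc, undefinedPoint_comp_map]
  exact (cancel_mono (P.η.app N)).1 ((comp_η f).trans (comp_η g).symm)

theorem disjointArrows_undefinedPoint (Y : C) :
    DisjointArrows (P.η.app Y) (P.undefinedPoint hbang Y) := by
  intro V v t hv
  have hpb := P.isPullback_φ (initial.to (⊤_ C)) hbang (initial.to (⊤_ C))
  have hpoints := P.comp_eq_comp_of_comp_η_eq_undefinedPoint hbang hv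
    (terminal.from Y ≫ P.η.app (⊤_ C)) (terminal.from Y ≫ P.φ _ hbang (initial.to (⊤_ C)))
  exact ⟨hpb.lift (v ≫ terminal.from Y) (v ≫ terminal.from Y) (by simpa using hpoints)⟩

end MPartialMapClassifier

namespace IsStrictComplement

variable [HasTerminal C] [HasInitial C] {M : StableSystemOfMonos C} {P : MPartialMapClassifier M}
  {hbang : M.mem (initial.to (⊤_ C))}

theorem mono {L G Gc : C} {m : L ⟶ G} {hm : M.mem m} {i : Gc ⟶ G}
    (h : IsStrictComplement M P hbang m hm i) : Mono i :=
  IsPullback.mono_fst_of_mono h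

variable [HasStrictInitialObjects C]

theorem exists_comp_eq_iff {L G Gc Z : C} {m : L ⟶ G} {hm : M.mem m} {i : Gc ⟶ G}
    (h : IsStrictComplement M P hbang m hm i) (x : Z ⟶ G) :
    (∃ y : Z ⟶ Gc, y ≫ i = x) ↔ DisjointArrows m x := by
  have hfalse := P.disjointArrows_undefinedPoint hbang (⊤_ C)
  rw [← P.falseArrow_eq_undefinedPoint hbang] at hfalse
  rw [← disjointArrows_comp_iff_of_isPullback (P.isPullback_φ m hm (terminal.from L)) x]
  constructor
  · rintro ⟨y, rfl⟩
    rw [Category.assoc, h.w]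
    exact (hfalse.comp_right _).comp_right y
  · intro hx
    have hχ : x ≫ P.φ m hm (terminal.from L) = terminal.from Z ≫ falseArrow M P hbang :=
      P.eq_of_disjointArrows hbang hx (hfalse.comp_right _)
    exact ⟨h.lift x _ hχ, h.lift_fst x _ hχ⟩

theorem disjointArrows {L G Gc : C} {m : L ⟶ G} {hm : M.mem m} {i : Gc ⟶ G}
    (h : IsStrictComplement M P hbang m hm i) : DisjointArrows m i :=
  (h.exists_comp_eq_iff i).1 ⟨𝟙 Gc, Category.id_comp i⟩

variable {K CK : C} {hη : M.mem (P.η.app K)} {i : CK ⟶ P.T.obj K}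

theorem eq_undefinedPoint (h : IsStrictComplement M P hbang (P.η.app K) hη i) :
    i = terminal.from CK ≫ P.undefinedPoint hbang K :=
  P.eq_of_disjointArrows hbang h.disjointArrows
    ((P.disjointArrows_undefinedPoint hbang K).comp_right _)

theorem nonempty_isTerminal (h : IsStrictComplement M P hbang (P.η.app K) hη i) :
    Nonempty (IsTerminal CK) := by
  have := h.mono
  obtain ⟨p, -⟩ := (h.exists_comp_eq_iff _).2 (P.disjointArrows_undefinedPoint hbang K)
  exact ⟨IsTerminal.ofUniqueHom (fun Z => terminal.from Z ≫ p) fun Z y =>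
    (cancel_mono i).1 (P.eq_of_disjointArrows hbang (h.disjointArrows.comp_right _)
      (h.disjointArrows.comp_right _))⟩

end IsStrictComplement

theorem strictComplement_Tl_isIso_general [HasTerminal C] [HasInitial C]
    [HasStrictInitialObjects C] {M : StableSystemOfMonos C} {P : MPartialMapClassifier M}
    {hbang : M.mem (initial.to (⊤_ C))} {K L : C} (l : K ⟶ L)
    {hηK : M.mem (P.η.app K)} {hηL : M.mem (P.η.app L)}
    {CK CL : C} {iK : CK ⟶ P.T.obj K} {iL : CL ⟶ P.T.obj L}
    (hK : IsStrictComplement M P hbang (P.η.app K) hηK iK)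
    (hL : IsStrictComplement M P hbang (P.η.app L) hηL iL) :
    (∃ c : CK ⟶ CL, c ≫ iL = iK ≫ P.T.map l) ∧ ∀ c : CK ⟶ CL, IsIso c := by
  constructor
  · rw [hL.exists_comp_eq_iff, hK.eq_undefinedPoint, Category.assoc, P.undefinedPoint_comp_map]
    exact (P.disjointArrows_undefinedPoint hbang L).comp_right _
  · obtain ⟨hCK⟩ := hK.nonempty_isTerminal
    obtain ⟨hCL⟩ := hL.nonempty_isTerminal
    exact isIso_of_isTerminal hCK hCL

/-- for every arrow `l : K ⟶ L`, the strict complement `T(l)∖l` of `l` in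
`T(l)` (taken with respect to the monos `η_K`, `η_L` and the pullback naturality square
`η_L ∘ l = T(l) ∘ η_K`), i.e. the induced arrow `T(K)∖K ⟶ T(L)∖L`, is an isomorphism. -/
theorem strictComplement_Tl_isIso {C : Type u} [Category.{v} C] [HasPullbacks C]
    [HasTerminal C] [HasInitial C] [HasStrictInitialObjects C]
    (M : StableSystemOfMonos C) (P : MPartialMapClassifier M)
    (hbang : M.mem (initial.to (⊤_ C)))
    {K L : C} (l : K ⟶ L)
    (hηK : M.mem (P.η.app K)) (hηL : M.mem (P.η.app L)) :
    ∀ {CK CL : C} (iK : CK ⟶ P.T.obj K) (iL : CL ⟶ P.T.obj L),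
      IsStrictComplement M P hbang (P.η.app K) hηK iK →
      IsStrictComplement M P hbang (P.η.app L) hηL iL →
      (∃ c : CK ⟶ CL, c ≫ iL = iK ≫ P.T.map l) ∧
      ∀ c : CK ⟶ CL, c ≫ iL = iK ≫ P.T.map l → IsIso c :=
  fun _ _ hK hL =>
    (strictComplement_Tl_isIso_general l hK hL).imp_right fun hc c _ => hc c
end

section
/- Let C be a category with pullbacks, M a stable system of monos of C, (T, η) an M-partial map classifier for C, with terminal object 1, strict initial object 0, and ! : 0 → 1 in M. Let n : K ↣ D and m : L ↣ G be monos in M and l : K → L, g : D → G arrows such that m ∘ l = g ∘ n is a pullback square. Then there exists a unique arrow g∖l : D∖K → G∖L such that (G∖m) ∘ (g∖l) = g ∘ (D∖n), and the resulting square with sides D∖n, g∖l, g, G∖m is a pullback. -/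
open CategoryTheory CategoryTheory.Limits

universe v u

variable {C : Type u} [Category.{v} C]

/-!
By uniqueness of classifying arrows, `χ_n = χ_m ∘ g`. Hence `D∖K` is the pullback of `false` along
`χ_m ∘ g`, and cancelling the pullback square defining `G∖L` leaves the required square. Since
`false` starts at the terminal object it is a mono, so the comparison arrow is determined by its
composite with `G∖m`.
-/

namespace MPartialMapClassifier

variable {M : StableSystemOfMonos C} (P : MPartialMapClassifier M)

theorem comp_φ {K L D G Y : C} {n : K ⟶ D} {m : L ⟶ G} {l : K ⟶ L} {g : D ⟶ G}
    (hm : M.mem m) (hsq : IsPullback l n m g) (f : L ⟶ Y) :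
    g ≫ P.φ m hm f = P.φ n (M.mem_of_isPullback hsq hm) (l ≫ f) :=
  P.φ_uniq n _ (l ≫ f) _ (hsq.paste_horiz (P.isPullback_φ m hm f))

variable [HasTerminal C]

/-- The characteristic arrow `χ_m = φ(m, !_L) : G ⟶ T(1)` of a mono `m : L ⟶ G` in `M`. -/
noncomputable def characteristicArrow {L G : C} (m : L ⟶ G) (hm : M.mem m) :
    G ⟶ P.T.obj (⊤_ C) :=
  P.φ m hm (terminal.from L)

theorem comp_characteristicArrow {K L D G : C} {n : K ⟶ D} {m : L ⟶ G} {l : K ⟶ L} {g : D ⟶ G}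
    (hm : M.mem m) (hsq : IsPullback l n m g) :
    g ≫ P.characteristicArrow m hm =
      P.characteristicArrow n (M.mem_of_isPullback hsq hm) := by
  simp only [characteristicArrow, P.comp_φ hm hsq, terminal.comp_from]

end MPartialMapClassifier

section PullbackAlongMono

variable {G Gc S Z : C} {iG : Gc ⟶ G} {p : Gc ⟶ S} {χ : G ⟶ Z} {t : S ⟶ Z} [Mono t]

theorem existsUnique_comp_eq_of_isPullback (hG : IsPullback iG p χ t) {W : C} {a : W ⟶ G}
    {b : W ⟶ S} (w : a ≫ χ = b ≫ t) : ∃! c : W ⟶ Gc, c ≫ iG = a := by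
  have : Mono iG := hG.mono_fst_of_mono
  exact ⟨hG.lift a b w, hG.lift_fst a b w, fun c hc =>
    (cancel_mono iG).1 (hc.trans (hG.lift_fst a b w).symm)⟩

theorem isPullback_of_isPullback_comp (hG : IsPullback iG p χ t) {D Dc : C} {g : D ⟶ G}
    {iD : Dc ⟶ D} {q : Dc ⟶ S} (hD : IsPullback iD q (g ≫ χ) t) {c : Dc ⟶ Gc}
    (hc : c ≫ iG = iD ≫ g) : IsPullback c iD iG g := by
  have hq : c ≫ p = q := by
    rw [← cancel_mono t, Category.assoc, ← hG.w, reassoc_of% hc, hD.w]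
  subst hq
  exact IsPullback.of_right hD.flip hc hG.flip

end PullbackAlongMono

theorem strictComplement_exists_unique_isPullback_general [HasTerminal C] [HasInitial C]
    (M : StableSystemOfMonos C) (P : MPartialMapClassifier M)
    (hbang : M.mem (initial.to (⊤_ C)))
    {K D L G : C} (n : K ⟶ D) (hn : M.mem n) (m : L ⟶ G) (hm : M.mem m)
    (l : K ⟶ L) (g : D ⟶ G) (hsq : IsPullback l n m g)
    {Dc Gc : C} (iD : Dc ⟶ D) (iG : Gc ⟶ G)
    (hD : IsStrictComplement M P hbang n hn iD)
    (hG : IsStrictComplement M P hbang m hm iG) :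
    (∃! c : Dc ⟶ Gc, c ≫ iG = iD ≫ g) ∧
    ∀ c : Dc ⟶ Gc, c ≫ iG = iD ≫ g → IsPullback c iD iG g := by
  have hD' : IsPullback iD (terminal.from Dc) (g ≫ P.characteristicArrow m hm)
      (falseArrow M P hbang) := by
    rw [P.comp_characteristicArrow hm hsq]
    exact hD
  have w : (iD ≫ g) ≫ P.characteristicArrow m hm =
      terminal.from Dc ≫ falseArrow M P hbang := by
    rw [Category.assoc, hD'.w]
  exact ⟨existsUnique_comp_eq_of_isPullback hG w,
    fun _ hc => isPullback_of_isPullback_comp hG hD' hc⟩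

/-- given monos `n : K ↣ D`, `m : L ↣ G` in `M` and a pullback square
`m ∘ l = g ∘ n`, there is a unique arrow `g∖l : D∖K ⟶ G∖L` between the strict
complements with `(G∖m) ∘ (g∖l) = g ∘ (D∖n)`, and the resulting square is a pullback. -/
theorem strictComplement_exists_unique_isPullback {C : Type u} [Category.{v} C]
    [HasPullbacks C] [HasTerminal C] [HasInitial C] [HasStrictInitialObjects C]
    (M : StableSystemOfMonos C) (P : MPartialMapClassifier M)
    (hbang : M.mem (initial.to (⊤_ C)))
    {K D L G : C} (n : K ⟶ D) (hn : M.mem n) (m : L ⟶ G) (hm : M.mem m)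
    (l : K ⟶ L) (g : D ⟶ G) (hsq : IsPullback l n m g)
    {Dc Gc : C} (iD : Dc ⟶ D) (iG : Gc ⟶ G)
    (hD : IsStrictComplement M P hbang n hn iD)
    (hG : IsStrictComplement M P hbang m hm iG) :
    (∃! c : Dc ⟶ Gc, c ≫ iG = iD ≫ g) ∧
    ∀ c : Dc ⟶ Gc, c ≫ iG = iD ≫ g → IsPullback c iD iG g :=
  strictComplement_exists_unique_isPullback_general M P hbang n hn m hm l g hsq iD iG hD hG
end

section
/- Let C be a category with pullbacks, M a stable system of monos of C, and (T, η) an M-partial map classifier for C. Let ρ = (l : K → L, r : K → R, t : K ↣ T_K) be an AGREE rule (t ∈ M) and m : L ↣ G a match in M. Let l' = φ(t,l) : T_K → T(L), m̄ = φ(m, id_L) : G → T(L), and let (g : D → G, n' : D → T_K) be a pullback of (m̄, l'). Then there exists a unique arrow n : K → D such that n' ∘ n = t and g ∘ n = m ∘ l; moreover the square m ∘ l = g ∘ n is a pullback, and n belongs to M. -/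
open CategoryTheory CategoryTheory.Limits

universe v u

section

variable {C : Type u} [Category.{v} C]

theorem existsUnique_lift_of_isPullback {D X Y Z : C} {fst : D ⟶ X} {snd : D ⟶ Y} {f : X ⟶ Z}
    {g : Y ⟶ Z} (hpb : IsPullback fst snd f g) {W : C} {h : W ⟶ X} {k : W ⟶ Y}
    (w : h ≫ f = k ≫ g) : ∃! n : W ⟶ D, n ≫ fst = h ∧ n ≫ snd = k := by
  refine ⟨hpb.lift h k w, ⟨hpb.lift_fst h k w, hpb.lift_snd h k w⟩, ?_⟩
  rintro n ⟨hfst, hsnd⟩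
  exact hpb.hom_ext (by rw [hfst, hpb.lift_fst]) (by rw [hsnd, hpb.lift_snd])

/-- In an AGREE step `a = m̄` and `b = φ(t, l)`. Since `m ≫ m̄ = η`, the square `houter` is then the
one classifying `(t, l)`. It is also the square `l, n, m, g` pasted to the pullback `hpb`, so
pullback cancellation applies. -/
theorem agree_interface_arrow_general (M : StableSystemOfMonos C) {K L G TK D Z : C}
    {l : K ⟶ L} {t : K ⟶ TK} {m : L ⟶ G} (hm : M.mem m) {g : D ⟶ G} {n' : D ⟶ TK}
    {a : G ⟶ Z} {b : TK ⟶ Z} (hpb : IsPullback g n' a b) (houter : IsPullback l t (m ≫ a) b) :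
    (∃! n : K ⟶ D, n ≫ n' = t ∧ n ≫ g = l ≫ m) ∧
    ∀ n : K ⟶ D, (n ≫ n' = t ∧ n ≫ g = l ≫ m) → IsPullback l n m g ∧ M.mem n := by
  have hcomm : t ≫ b = (l ≫ m) ≫ a := by rw [Category.assoc, houter.w]
  refine ⟨existsUnique_lift_of_isPullback hpb.flip hcomm, ?_⟩
  rintro n ⟨rfl, hg⟩
  have hsquare : IsPullback l n m g := houter.of_bot hg.symm hpb
  exact ⟨hsquare, M.mem_of_isPullback hsquare hm⟩

namespace MPartialMapClassifier

variable {M : StableSystemOfMonos C} (P : MPartialMapClassifier M)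

theorem comp_φ_id {X Z : C} (m : X ⟶ Z) (hm : M.mem m) : m ≫ P.φ m hm (𝟙 X) = P.η.app X :=
  (P.isPullback_φ m hm (𝟙 X)).w.symm.trans (Category.id_comp _)

theorem isPullback_comp_φ_id {K L G TK : C} (l : K ⟶ L) (t : K ⟶ TK) (ht : M.mem t)
    (m : L ⟶ G) (hm : M.mem m) : IsPullback l t (m ≫ P.φ m hm (𝟙 L)) (P.φ t ht l) := by
  rw [P.comp_φ_id]
  exact P.isPullback_φ t ht l

end MPartialMapClassifier

end

/-- in the first phase of an AGREE rewrite step (pullback of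
`(m̄, l' = φ(t,l))`), there is a unique arrow `n : K ⟶ D` with `n ≫ n' = t` and
`n ≫ g = l ≫ m`; moreover the square `m ∘ l = g ∘ n` is a pullback and `n ∈ M`. -/
theorem agree_interface_arrow {C : Type u} [Category.{v} C] [HasPullbacks C]
    (M : StableSystemOfMonos C) (P : MPartialMapClassifier M)
    {K L R TK G : C} (l : K ⟶ L) (r : K ⟶ R) (t : K ⟶ TK) (ht : M.mem t)
    (m : L ⟶ G) (hm : M.mem m)
    {D : C} (g : D ⟶ G) (n' : D ⟶ TK)
    (hpb : IsPullback g n' (P.φ m hm (𝟙 L)) (P.φ t ht l)) :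
    (∃! n : K ⟶ D, n ≫ n' = t ∧ n ≫ g = l ≫ m) ∧
    ∀ n : K ⟶ D, (n ≫ n' = t ∧ n ≫ g = l ≫ m) → IsPullback l n m g ∧ M.mem n :=
  agree_interface_arrow_general M hm hpb (P.isPullback_comp_φ_id l t ht m hm)
end

section
/- Let C be a category with pullbacks, a stable system of monos M, an M-partial map classifier (T, η), and pushouts along monos in M. Let (l : K → L, r : K → R) be a span rule and m : L ↣ G a match in M. Then G rewrites to H via the SqPO step for (l, r) at m if and only if G rewrites to H via the AGREE step for the rule (l, r, η_K : K ↣ T(K)) at m. -/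
open CategoryTheory CategoryTheory.Limits

universe v u

variable {C : Type u} [Category.{v} C]

/-- The SqPO rewrite step `G ⇒ H` for the span rule `(l, r)` at match `m`: a final
pullback complement of `(l, m)` followed by a pushout along `r`. -/
def SqpoStep {K L R G : C} (l : K ⟶ L) (r : K ⟶ R) (m : L ⟶ G) (H : C) : Prop :=
  ∃ (D : C) (n : K ⟶ D) (a : D ⟶ G) (h : D ⟶ H) (p : R ⟶ H),
    IsFinalPullbackComplement l m n a ∧ IsPushout n r h p

/-- The AGREE rewrite step `G ⇒ H` for the rule `(l, r, t)` at match `m`: a pullback of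
`(m̄, φ(t,l))`, the induced interface arrow `n`, then a pushout along `r`. -/
def AgreeStep (M : StableSystemOfMonos C) (P : MPartialMapClassifier M)
    {K L R TK G : C} (l : K ⟶ L) (r : K ⟶ R) (t : K ⟶ TK) (ht : M.mem t)
    (m : L ⟶ G) (hm : M.mem m) (H : C) : Prop :=
  ∃ (D : C) (g : D ⟶ G) (n' : D ⟶ TK) (n : K ⟶ D) (h : D ⟶ H) (p : R ⟶ H),
    IsPullback g n' (P.φ m hm (𝟙 L)) (P.φ t ht l) ∧
    n ≫ n' = t ∧ n ≫ g = l ≫ m ∧ IsPushout n r h p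

/-! A pullback of `m̄` and `φ(η_K, l)` represents the pairs `(f, ψ)` with `f ≫ m̄ = ψ ≫ φ(η_K, l)`.
Such a `ψ` is the same thing as a partial map `(e, h)` into `K`, and the equation says exactly that
`(h ≫ l, e)` is a pullback of `(m, f)`; so these pairs are precisely the test data in the universal
property of a final pullback complement of `(l, m)`. -/

theorem isPullback_of_existsUnique_lift {W X Y Z : C} {fst : W ⟶ X} {snd : W ⟶ Y} {f : X ⟶ Z}
    {g : Y ⟶ Z} (w : fst ≫ f = snd ≫ g)
    (hlift : ∀ {V : C} (a : V ⟶ X) (b : V ⟶ Y), a ≫ f = b ≫ g →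
      ∃! u : V ⟶ W, u ≫ fst = a ∧ u ≫ snd = b) :
    IsPullback fst snd f g :=
  .mk' w
    (fun _ u u' hfst hsnd ↦
      (hlift (u' ≫ fst) (u' ≫ snd) (by simp [w])).unique ⟨hfst, hsnd⟩ ⟨rfl, rfl⟩)
    (fun _ a b hab ↦ (hlift a b hab).exists)

theorem isPullback_paste_horiz_iff_of_mono {W V X X' Y Z : C} {u : X ⟶ X'} [Mono u] {m : X ⟶ Y}
    {i : X' ⟶ Z} {j : Y ⟶ Z} {d : W ⟶ X} {e : W ⟶ V} {f : V ⟶ Y} (hu : IsPullback u m i j) :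
    IsPullback (d ≫ u) e i (f ≫ j) ↔ IsPullback d e m f := by
  refine ⟨fun hd ↦ hd.of_right ?_ hu, fun hd ↦ hd.paste_horiz hu⟩
  obtain ⟨k, hku, hkm⟩ := hu.exists_lift (d ≫ u) (e ≫ f) (by rw [hd.w, Category.assoc])
  rw [← hkm, (cancel_mono u).1 hku]

theorem isPullback_comp_iff_of_isPullback_id {W V X Y Z : C} {m : X ⟶ Y} {i : X ⟶ Z} {j : Y ⟶ Z}
    {d : W ⟶ X} {e : W ⟶ V} {f : V ⟶ Y} (hm : IsPullback (𝟙 X) m i j) :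
    IsPullback d e i (f ≫ j) ↔ IsPullback d e m f := by
  simpa using isPullback_paste_horiz_iff_of_mono (d := d) (e := e) (f := f) hm

namespace MPartialMapClassifier

variable {M : StableSystemOfMonos C} (P : MPartialMapClassifier M)

theorem eq_φ_iff {X Y Z : C} {m : X ⟶ Z} (hm : M.mem m) {f : X ⟶ Y} {ψ : Z ⟶ P.T.obj Y} :
    ψ = P.φ m hm f ↔ IsPullback f m (P.η.app Y) ψ :=
  ⟨fun h ↦ h ▸ P.isPullback_φ m hm f, P.φ_uniq m hm f ψ⟩

theorem self_comp_φ_id {X Z : C} {m : X ⟶ Z} (hm : M.mem m) :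
    m ≫ P.φ m hm (𝟙 X) = P.η.app X := by
  simpa using (P.isPullback_φ m hm (𝟙 X)).w.symm

theorem comp_φ_s14 {X Y Z X' Z' : C} {m : X ⟶ Z} (hm : M.mem m) {d : X' ⟶ X} {e : X' ⟶ Z'}
    (he : M.mem e) {f : Z' ⟶ Z} (hd : IsPullback d e m f) (g : X ⟶ Y) :
    f ≫ P.φ m hm g = P.φ e he (d ≫ g) :=
  (P.eq_φ_iff he).2 (hd.paste_horiz (P.isPullback_φ m hm g))

variable {K L G : C} {l : K ⟶ L} {m : L ⟶ G} (hm : M.mem m) (hη : M.mem (P.η.app K))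

theorem comp_φ_id_eq_comp_φ_η_iff {K' D' : C} {h : K' ⟶ K} {e : K' ⟶ D'}
    {f : D' ⟶ G} {ψ : D' ⟶ P.T.obj K} (hψ : IsPullback h e (P.η.app K) ψ) :
    f ≫ P.φ m hm (𝟙 L) = ψ ≫ P.φ (P.η.app K) hη l ↔ IsPullback (h ≫ l) e m f := by
  have he : M.mem e := M.mem_of_isPullback hψ hη
  rw [P.comp_φ_s14 hη he hψ, P.eq_φ_iff,
    isPullback_comp_iff_of_isPullback_id (P.isPullback_φ m hm (𝟙 L))]

variable {D : C} {n : K ⟶ D} {a : D ⟶ G} {n' : D ⟶ P.T.obj K}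

theorem comp_eq_φ_iff {K' D' : C} {h : K' ⟶ K} {e : K' ⟶ D'} (he : M.mem e) {g : D' ⟶ D}
    (hn : IsPullback (𝟙 K) n (P.η.app K) n') (hl : IsPullback l n m a)
    (hg : IsPullback (h ≫ l) e m (g ≫ a)) :
    g ≫ n' = P.φ e he h ↔ e ≫ g = h ≫ n := by
  rw [P.eq_φ_iff, isPullback_comp_iff_of_isPullback_id hn]
  exact ⟨fun hh ↦ hh.w.symm, fun w ↦ hg.of_right w.symm hl⟩

theorem isFinalPullbackComplement_of_isPullback
    (ha : IsPullback a n' (P.φ m hm (𝟙 L)) (P.φ (P.η.app K) hη l))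
    (hnn' : n ≫ n' = P.η.app K) (hna : n ≫ a = l ≫ m) :
    IsFinalPullbackComplement l m n a := by
  have hm_pb := P.isPullback_φ m hm (𝟙 L)
  have hη_pb := P.isPullback_φ (P.η.app K) hη l
  have hl : IsPullback l n m a :=
    IsPullback.of_bot (by rwa [hnn', P.self_comp_φ_id]) hna.symm ha
  have hn : IsPullback (𝟙 K) n (P.η.app K) n' := by
    have hl' : IsPullback (𝟙 K ≫ l) n (P.η.app L) (n' ≫ P.φ (P.η.app K) hη l) := by
      rwa [← ha.w, isPullback_comp_iff_of_isPullback_id hm_pb, Category.id_comp]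
    exact hl'.of_right (by simp [hnn']) hη_pb
  refine ⟨hl, ?_⟩
  rintro K' D' d e f h hd rfl
  have he : M.mem e := M.mem_of_isPullback hd hm
  have hw := (P.comp_φ_id_eq_comp_φ_η_iff hm hη (P.isPullback_φ e he h)).2 hd
  have hiff (g : D' ⟶ D) (hg : g ≫ a = f) : g ≫ n' = P.φ e he h ↔ e ≫ g = h ≫ n :=
    P.comp_eq_φ_iff he hn hl (hg ▸ hd)
  obtain ⟨g, hga, hgn'⟩ := ha.exists_lift _ _ hw
  refine ⟨g, ⟨hga, (hiff g hga).1 hgn'⟩, fun g' ⟨hga', hg'⟩ ↦ ?_⟩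
  exact ha.hom_ext (hga'.trans hga.symm) (((hiff g' hga').2 hg').trans hgn'.symm)

theorem isPullback_of_isFinalPullbackComplement [HasPullbacksAlong (P.η.app K)]
    (hn : M.mem n) (ha : IsFinalPullbackComplement l m n a) :
    IsPullback a (P.φ n hn (𝟙 K)) (P.φ m hm (𝟙 L)) (P.φ (P.η.app K) hη l) := by
  obtain ⟨hl, hfinal⟩ := ha
  have hn_pb := P.isPullback_φ n hn (𝟙 K)
  have hw := (P.comp_φ_id_eq_comp_φ_η_iff hm hη hn_pb).2 (by rwa [Category.id_comp])
  refine isPullback_of_existsUnique_lift hw fun f ψ hfψ ↦ ?_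
  have hψ := (IsPullback.of_hasPullback ψ (P.η.app K)).flip
  have he := M.mem_of_isPullback hψ hη
  have hd := (P.comp_φ_id_eq_comp_φ_η_iff hm hη hψ).1 hfψ
  rw [(P.eq_φ_iff he).2 hψ]
  refine (existsUnique_congr fun g ↦ and_congr_right fun hga ↦ ?_).2 (hfinal _ _ f _ hd rfl)
  exact P.comp_eq_φ_iff he hn_pb hl (hga ▸ hd)

end MPartialMapClassifier

theorem sqpo_iff_agree_with_eta_general
    (M : StableSystemOfMonos C) (P : MPartialMapClassifier M)
    {K L R G : C} [HasPullbacksAlong (P.η.app K)] (l : K ⟶ L) (r : K ⟶ R) (m : L ⟶ G)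
    (hm : M.mem m) (hη : M.mem (P.η.app K)) (H : C) :
    SqpoStep l r m H ↔ AgreeStep M P l r (P.η.app K) hη m hm H := by
  constructor
  · rintro ⟨D, n, a, h, p, ha, hpo⟩
    have hn : M.mem n := M.mem_of_isPullback ha.1 hm
    exact ⟨D, a, P.φ n hn (𝟙 K), n, h, p,
      P.isPullback_of_isFinalPullbackComplement hm hη hn ha,
      P.self_comp_φ_id hn, ha.1.w.symm, hpo⟩
  · rintro ⟨D, a, n', n, h, p, ha, hnn', hna, hpo⟩
    exact ⟨D, n, a, h, p, P.isFinalPullbackComplement_of_isPullback hm hη ha hnn' hna, hpo⟩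

/-- AGREE subsumes SqPO with monic matches: `G ⇒ H` via the SqPO step for
the span rule `(l, r)` at `m` iff `G ⇒ H` via the AGREE step for `(l, r, η_K)` at `m`. -/
theorem sqpo_iff_agree_with_eta [HasPullbacks C]
    (M : StableSystemOfMonos C) (P : MPartialMapClassifier M)
    (hpush : ∀ {X Y Z : C} (f : X ⟶ Y) (h : X ⟶ Z), M.mem f → HasPushout f h)
    {K L R G : C} (l : K ⟶ L) (r : K ⟶ R) (m : L ⟶ G) (hm : M.mem m)
    (hη : M.mem (P.η.app K)) (H : C) :
    SqpoStep l r m H ↔ AgreeStep M P l r (P.η.app K) hη m hm H :=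
  sqpo_iff_agree_with_eta_general M P l r m hm hη H
end
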